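/- arXiv:1709.08618 — 6 statements merged into one kernel-verified Lean document; each statement's English description precedes it below -/
import Mathlib

section
/- Banach–Nečas–Babuška theorem: assume (i) the inf-sup condition: there is c₁ > 0 with sup over v ∈ V, v ≠ 0 of a(u,v)/‖v‖_V ≥ c₁‖u‖_U for every u ∈ U; (ii) continuity: there are c₂, c₃ > 0 with |a(u,v)| ≤ c₂‖u‖_U·‖v‖_V and |F(v)| ≤ c₃‖v‖_V for all u ∈ U, v ∈ V; (iii) injectivity: if v ∈ V satisfies a(u,v) = 0 for all u ∈ U, then v = 0. Then there exists a unique u ∈ U with a(u,v) = F(v) for all v ∈ V, and it satisfies ‖u‖_U ≤ (1/c₁)·‖F‖_{V*}, where ‖F‖_{V*} := sup over v ≠ 0 of F(v)/‖v‖_V. -/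
/-- **Banach–Nečas–Babuška theorem.** Let `U` be a Banach space, `V` a reflexive
Banach space, `a : U × V → ℝ` a bilinear form and `F` a linear functional on `V`
satisfying (i) the inf-sup condition with constant `c₁ > 0`, (ii) continuity of `a`
and `F`, and (iii) injectivity: `a(u,v) = 0` for all `u` implies `v = 0`. Then there
is a unique `u ∈ U` with `a(u,v) = F(v)` for all `v ∈ V`, and it satisfies
`‖u‖ ≤ (1/c₁)·‖F‖_{V*}` with `‖F‖_{V*} = sup_{v ≠ 0} F v / ‖v‖`. -/
theorem banach_necas_babuska
    {U V : Type*} [NormedAddCommGroup U] [NormedSpace ℝ U] [CompleteSpace U]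
    [NormedAddCommGroup V] [NormedSpace ℝ V] [CompleteSpace V]
    (hrefl : Function.Surjective (NormedSpace.inclusionInDoubleDual ℝ V))
    (a : U →ₗ[ℝ] V →ₗ[ℝ] ℝ) (F : V →ₗ[ℝ] ℝ)
    (c₁ : ℝ) (hc₁ : 0 < c₁)
    (hinfsup : ∀ u : U,
      c₁ * ‖u‖ ≤ sSup {r : ℝ | ∃ v : V, v ≠ 0 ∧ r = a u v / ‖v‖})
    (c₂ c₃ : ℝ) (hc₂ : 0 < c₂) (hc₃ : 0 < c₃)
    (hconta : ∀ (u : U) (v : V), |a u v| ≤ c₂ * ‖u‖ * ‖v‖)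
    (hcontF : ∀ v : V, |F v| ≤ c₃ * ‖v‖)
    (hinj : ∀ v : V, (∀ u : U, a u v = 0) → v = 0) :
    (∃! u : U, ∀ v : V, a u v = F v) ∧
      ∀ u : U, (∀ v : V, a u v = F v) →
        ‖u‖ ≤ (1 / c₁) * sSup {r : ℝ | ∃ v : V, v ≠ 0 ∧ r = F v / ‖v‖} := by
  have hbd : ∀ u : U, (∀ v : V, a u v = F v) →
        ‖u‖ ≤ (1 / c₁) * sSup {r : ℝ | ∃ v : V, v ≠ 0 ∧ r = F v / ‖v‖} := by
    intro u hu
    have h := hinfsup u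
    simp only [hu] at h
    rw [one_div, ← div_eq_inv_mul, le_div_iff₀ hc₁]
    linarith
  refine ⟨?_, hbd⟩
  let A : U →L[ℝ] StrongDual ℝ V := LinearMap.mkContinuous₂ a c₂ hconta
  have hA : ∀ u v, A u v = a u v := fun u v => rfl
  let G : StrongDual ℝ V := F.mkContinuous c₃ hcontF
  have hG : ∀ v, G v = F v := fun v => rfl
  have hlow : ∀ u, c₁ * ‖u‖ ≤ ‖A u‖ := by
    intro u
    refine (hinfsup u).trans (Real.sSup_le ?_ (norm_nonneg _))
    rintro r ⟨v, hv, rfl⟩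
    rw [div_le_iff₀ (norm_pos_iff.2 hv), ← hA]
    exact (le_abs_self _).trans ((A u).le_opNorm v)
  have hanti : AntilipschitzWith (Real.toNNReal c₁⁻¹) A := by
    refine ContinuousLinearMap.antilipschitz_of_bound A fun u => ?_
    rw [Real.coe_toNNReal _ (inv_nonneg.2 hc₁.le), ← div_eq_inv_mul, le_div_iff₀ hc₁]
    linarith [hlow u]
  have hclosed : IsClosed (Set.range A) := hanti.isClosed_range A.uniformContinuous
  have hconv : Convex ℝ (Set.range A) := by
    rintro _ ⟨x, rfl⟩ _ ⟨y, rfl⟩ p q _ _ _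
    exact ⟨p • x + q • y, by simp⟩
  have hmem : G ∈ Set.range A := by
    by_contra hn
    obtain ⟨f, s, h1, h2⟩ := geometric_hahn_banach_closed_point hconv hclosed hn
    obtain ⟨v, rfl⟩ := hrefl f
    have h1' : ∀ w, a w v < s := fun w => h1 _ ⟨w, rfl⟩
    have h2' : s < F v := h2
    have hv : v = 0 := by
      refine hinj v fun w => ?_
      by_contra hne
      have := h1' ((s / a w v) • w)
      simp [hne] at this
    have h0 := h1' 0
    simp [hv] at h0 h2'
    linarith
  obtain ⟨u, hu⟩ := hmem
  refine ⟨u, fun v => by rw [← hA, hu, hG], fun w hw => ?_⟩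
  apply hanti.injective
  ext v
  rw [hu, hA, hG, hw]
end

section
/- Discrete Banach–Nečas–Babuška theorem: assume (i) the discrete inf-sup condition: there is c₁ > 0 with sup over v_h ∈ V_h, v_h ≠ 0 of a_h(u_h,v_h)/‖v_h‖ ≥ c₁‖u_h‖ for every u_h ∈ U_h; (ii) continuity: there are c₂, c₃ > 0 with |a_h(u_h,v_h)| ≤ c₂‖u_h‖·‖v_h‖ and |F_h(v_h)| ≤ c₃‖v_h‖ for all u_h ∈ U_h, v_h ∈ V_h. Then there exists a unique u_h ∈ U_h with a_h(u_h,v_h) = F_h(v_h) for all v_h ∈ V_h, and it satisfies ‖u_h‖ ≤ (1/c₁)·sup over v_h ≠ 0 of F_h(v_h)/‖v_h‖. -/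
/-- **Discrete Banach–Nečas–Babuška theorem.** Let `U_h` and `V_h` be
finite-dimensional normed spaces of the same dimension, `a_h` a bilinear form and
`F_h` a linear functional satisfying (i) the discrete inf-sup condition with constant
`c₁ > 0` and (ii) continuity. Then there is a unique `u_h ∈ U_h` with
`a_h(u_h, v_h) = F_h(v_h)` for all `v_h ∈ V_h`, and it satisfies
`‖u_h‖ ≤ (1/c₁)·sup_{v_h ≠ 0} F_h v_h / ‖v_h‖`. -/
theorem discrete_banach_necas_babuska
    {Uh Vh : Type*} [NormedAddCommGroup Uh] [NormedSpace ℝ Uh]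
    [NormedAddCommGroup Vh] [NormedSpace ℝ Vh]
    [FiniteDimensional ℝ Uh] [FiniteDimensional ℝ Vh]
    (hdim : Module.finrank ℝ Uh = Module.finrank ℝ Vh)
    (ah : Uh →ₗ[ℝ] Vh →ₗ[ℝ] ℝ) (Fh : Vh →ₗ[ℝ] ℝ)
    (c₁ : ℝ) (hc₁ : 0 < c₁)
    (hinfsup : ∀ uh : Uh,
      c₁ * ‖uh‖ ≤ sSup {r : ℝ | ∃ vh : Vh, vh ≠ 0 ∧ r = ah uh vh / ‖vh‖})
    (c₂ c₃ : ℝ) (hc₂ : 0 < c₂) (hc₃ : 0 < c₃)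
    (hconta : ∀ (uh : Uh) (vh : Vh), |ah uh vh| ≤ c₂ * ‖uh‖ * ‖vh‖)
    (hcontF : ∀ vh : Vh, |Fh vh| ≤ c₃ * ‖vh‖) :
    (∃! uh : Uh, ∀ vh : Vh, ah uh vh = Fh vh) ∧
      ∀ uh : Uh, (∀ vh : Vh, ah uh vh = Fh vh) →
        ‖uh‖ ≤ (1 / c₁) * sSup {r : ℝ | ∃ vh : Vh, vh ≠ 0 ∧ r = Fh vh / ‖vh‖} := by
  have hinj : Function.Injective ah := by
    rw [injective_iff_map_eq_zero]
    intro u hu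
    have h := hinfsup u
    have hs : sSup {r : ℝ | ∃ vh : Vh, vh ≠ 0 ∧ r = ah u vh / ‖vh‖} ≤ 0 := by
      apply Real.sSup_le _ le_rfl
      rintro r ⟨v, _, rfl⟩
      simp [hu]
    have h2 : ‖u‖ ≤ 0 := by
      by_contra hlt
      have := mul_pos hc₁ (not_le.mp hlt)
      linarith
    exact norm_le_zero_iff.mp h2
  have hd : Module.finrank ℝ Uh = Module.finrank ℝ (Vh →ₗ[ℝ] ℝ) := by
    rw [hdim]
    exact (Subspace.dual_finrank_eq (K := ℝ) (V := Vh)).symm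
  have hsurj : Function.Surjective ah :=
    (LinearMap.injective_iff_surjective_of_finrank_eq_finrank hd).mp hinj
  constructor
  · obtain ⟨u, hu⟩ := hsurj Fh
    refine ⟨u, fun v => by rw [hu], fun w hw => hinj ?_⟩
    rw [hu]
    exact LinearMap.ext hw
  · intro u hu
    have h := hinfsup u
    simp only [hu] at h
    rw [one_div, ← div_eq_inv_mul, le_div_iff₀ hc₁, mul_comm]
    exact h
end

section
/- First Strang lemma: for every w_h ∈ U_h one has ‖u − u_h‖ ≤ (1/c₁)·sup over v_h ∈ V_h, v_h ≠ 0 of |F(v_h) − F_h(v_h)|/‖v_h‖ + (1 + c₄/c₁)·‖u − w_h‖ + (1/c₁)·sup over v_h ∈ V_h, v_h ≠ 0 of |a(w_h,v_h) − a_h(w_h,v_h)|/‖v_h‖. Consequently ‖u − u_h‖ is bounded by the first supremum plus the infimum over w_h ∈ U_h of the last two terms. -/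
/-- **First Strang lemma.** Let `U_h ⊆ U`, `V_h ⊆ V` be subspaces, `a_h` a discrete
bilinear form satisfying the discrete inf-sup condition with constant `c₁ > 0`, and
let `a` satisfy `|a(u, v_h)| ≤ c₄‖u‖‖v_h‖`. If `u` solves the continuous problem and
`u_h` the discrete one, then for every `w_h ∈ U_h`,
`‖u − u_h‖ ≤ (1/c₁)·sup_{v_h ≠ 0} |F v_h − F_h v_h|/‖v_h‖ + (1 + c₄/c₁)‖u − w_h‖
  + (1/c₁)·sup_{v_h ≠ 0} |a(w_h, v_h) − a_h(w_h, v_h)|/‖v_h‖`,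
and consequently `‖u − u_h‖` is bounded by the first supremum plus the infimum over
`w_h ∈ U_h` of the last two terms. -/
theorem first_strang_lemma
    {U V : Type*} [NormedAddCommGroup U] [NormedSpace ℝ U]
    [NormedAddCommGroup V] [NormedSpace ℝ V]
    (Uh : Submodule ℝ U) (Vh : Submodule ℝ V)
    (a : U →ₗ[ℝ] V →ₗ[ℝ] ℝ) (ah : Uh →ₗ[ℝ] Vh →ₗ[ℝ] ℝ)
    (F : V →ₗ[ℝ] ℝ) (Fh : Vh →ₗ[ℝ] ℝ)
    (c₁ : ℝ) (hc₁ : 0 < c₁)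
    (hinfsup : ∀ uh : Uh,
      c₁ * ‖uh‖ ≤ sSup {r : ℝ | ∃ vh : Vh, vh ≠ 0 ∧ r = ah uh vh / ‖vh‖})
    (c₄ : ℝ) (hc₄ : 0 < c₄)
    (hcont : ∀ (x : U) (vh : Vh), |a x (vh : V)| ≤ c₄ * ‖x‖ * ‖vh‖)
    (u : U) (hu : ∀ v : V, a u v = F v)
    (uh : Uh) (huh : ∀ vh : Vh, ah uh vh = Fh vh) :
    (∀ wh : Uh,
      ‖u - (uh : U)‖ ≤
        (1 / c₁) * sSup {r : ℝ | ∃ vh : Vh, vh ≠ 0 ∧ r = |F (vh : V) - Fh vh| / ‖vh‖}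
        + (1 + c₄ / c₁) * ‖u - (wh : U)‖
        + (1 / c₁) * sSup {r : ℝ | ∃ vh : Vh, vh ≠ 0 ∧
            r = |a (wh : U) (vh : V) - ah wh vh| / ‖vh‖}) ∧
    ‖u - (uh : U)‖ ≤
      (1 / c₁) * sSup {r : ℝ | ∃ vh : Vh, vh ≠ 0 ∧ r = |F (vh : V) - Fh vh| / ‖vh‖}
      + sInf {s : ℝ | ∃ wh : Uh,
          s = (1 + c₄ / c₁) * ‖u - (wh : U)‖
            + (1 / c₁) * sSup {r : ℝ | ∃ vh : Vh, vh ≠ 0 ∧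
                r = |a (wh : U) (vh : V) - ah wh vh| / ‖vh‖}} := by
  have hbd : ∀ x : Uh, ∃ M : ℝ, ∀ v : Vh, |ah x v| ≤ M * ‖v‖ := by
    intro x
    by_cases hx : x = 0
    · exact ⟨0, fun v => by simp [hx]⟩
    have hB : BddAbove {r : ℝ | ∃ vh : Vh, vh ≠ 0 ∧ r = ah x vh / ‖vh‖} := by
      by_contra hB
      have h := hinfsup x
      rw [Real.sSup_of_not_bddAbove hB] at h
      have : 0 < c₁ * ‖x‖ := mul_pos hc₁ (norm_pos_iff.mpr hx)
      linarith
    obtain ⟨M, hM⟩ := hB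
    refine ⟨M, fun v => ?_⟩
    by_cases hv : v = 0
    · simp [hv]
    have hpos : 0 < ‖v‖ := norm_pos_iff.mpr hv
    have h1 : ah x v / ‖v‖ ≤ M := hM ⟨v, hv, rfl⟩
    have h2 : ah x (-v) / ‖-v‖ ≤ M := hM ⟨-v, neg_ne_zero.mpr hv, rfl⟩
    rw [norm_neg, map_neg] at h2
    rw [div_le_iff₀ hpos] at h1 h2
    exact abs_le.mpr ⟨by linarith, h1⟩
  have key : ∀ (f : Vh → ℝ) (M : ℝ), (∀ v, |f v| ≤ M * ‖v‖) → ∀ v : Vh,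
      |f v| ≤ sSup {r : ℝ | ∃ vh : Vh, vh ≠ 0 ∧ r = |f vh| / ‖vh‖} * ‖v‖ := by
    intro f M hf v
    by_cases hv : v = 0
    · have := hf v
      simpa [hv] using this
    have hpos : 0 < ‖v‖ := norm_pos_iff.mpr hv
    rw [← div_le_iff₀ hpos]
    refine le_csSup ⟨M, ?_⟩ ⟨v, hv, rfl⟩
    rintro r ⟨w, hw, rfl⟩
    rw [div_le_iff₀ (norm_pos_iff.mpr hw)]
    exact hf w
  have hnn : ∀ f : Vh → ℝ, 0 ≤ sSup {r : ℝ | ∃ vh : Vh, vh ≠ 0 ∧ r = |f vh| / ‖vh‖} := by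
    intro f
    apply Real.sSup_nonneg
    rintro r ⟨w, hw, rfl⟩
    positivity
  have main : ∀ wh : Uh,
      ‖u - (uh : U)‖ ≤
        (1 / c₁) * sSup {r : ℝ | ∃ vh : Vh, vh ≠ 0 ∧ r = |F (vh : V) - Fh vh| / ‖vh‖}
        + (1 + c₄ / c₁) * ‖u - (wh : U)‖
        + (1 / c₁) * sSup {r : ℝ | ∃ vh : Vh, vh ≠ 0 ∧
            r = |a (wh : U) (vh : V) - ah wh vh| / ‖vh‖} := by
    intro wh
    obtain ⟨M1, hM1⟩ := hbd uh
    obtain ⟨M2, hM2⟩ := hbd wh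
    have kA := key (fun vh => F (vh : V) - Fh vh) (c₄ * ‖u‖ + M1) (fun v => by
      have h1 := hcont u v
      have h2 := hM1 v
      rw [hu] at h1
      rw [huh] at h2
      have h3 := abs_sub (F (v : V)) (Fh v)
      linarith)
    have kB := key (fun vh => a (wh : U) (vh : V) - ah wh vh) (c₄ * ‖(wh : U)‖ + M2) (fun v => by
      have h1 := hcont wh v
      have h2 := hM2 v
      have h3 := abs_sub (a (wh : U) (v : V)) (ah wh v)
      linarith)
    have nA := hnn (fun vh => F (vh : V) - Fh vh)
    have nB := hnn (fun vh => a (wh : U) (vh : V) - ah wh vh)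
    set A := sSup {r : ℝ | ∃ vh : Vh, vh ≠ 0 ∧ r = |F (vh : V) - Fh vh| / ‖vh‖}
    set B := sSup {r : ℝ | ∃ vh : Vh, vh ≠ 0 ∧
            r = |a (wh : U) (vh : V) - ah wh vh| / ‖vh‖}
    have h1 : c₁ * ‖uh - wh‖ ≤ A + c₄ * ‖u - (wh : U)‖ + B := by
      refine (hinfsup (uh - wh)).trans (Real.sSup_le ?_ (by positivity))
      rintro r ⟨v, hv, rfl⟩
      rw [div_le_iff₀ (norm_pos_iff.mpr hv)]
      have e1 := (abs_le.mp (kA v)).1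
      have e2 := (abs_le.mp (kB v)).2
      have e3 := (abs_le.mp (hcont (u - wh) v)).2
      rw [map_sub, LinearMap.sub_apply, hu] at e3
      rw [map_sub, LinearMap.sub_apply, huh]
      linarith
    have h2 : ‖u - (uh : U)‖ ≤ ‖u - (wh : U)‖ + ‖uh - wh‖ := by
      have := norm_sub_le (u - (wh : U)) ((uh : U) - wh)
      rw [sub_sub_sub_cancel_right] at this
      exact this
    have h3 : ‖uh - wh‖ ≤ (A + c₄ * ‖u - (wh : U)‖ + B) / c₁ := by
      rw [le_div_iff₀ hc₁]
      linarith
    calc _ ≤ _ := h2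
      _ ≤ ‖u - (wh : U)‖ + (A + c₄ * ‖u - (wh : U)‖ + B) / c₁ := by linarith
      _ = _ := by ring
  refine ⟨main, ?_⟩
  rw [← sub_le_iff_le_add']
  refine le_csInf ⟨_, 0, rfl⟩ ?_
  rintro s ⟨wh, rfl⟩
  have := main wh
  linarith
end

section
/- Second Strang lemma: for every w_h ∈ U_h one has ‖u − u_h‖ ≤ (1 + c₄/c₁)·‖u − w_h‖ + (1/c₁)·sup over v_h ∈ V_h, v_h ≠ 0 of |F_h(v_h) − a_h(u,v_h)|/‖v_h‖. Consequently ‖u − u_h‖ ≤ (1 + c₄/c₁)·inf over w_h ∈ U_h of ‖u − w_h‖ + (1/c₁)·sup over v_h ≠ 0 of |F_h(v_h) − a_h(u,v_h)|/‖v_h‖. -/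
/-- **Second Strang lemma.** Let `X` be a normed space (representing `U(h)`),
`U_h ⊆ X` a subspace, `V_h` a normed space, and `a_h : X × V_h → ℝ` a bilinear form
satisfying the discrete inf-sup condition on `U_h` with constant `c₁ > 0` and the
bound `|a_h(x, v_h)| ≤ c₄‖x‖‖v_h‖`. If `u_h ∈ U_h` solves the discrete problem, then
for every `w_h ∈ U_h`,
`‖u − u_h‖ ≤ (1 + c₄/c₁)‖u − w_h‖ + (1/c₁)·sup_{v_h ≠ 0} |F_h v_h − a_h(u, v_h)|/‖v_h‖`,
and consequently the same bound holds with the infimum over `w_h ∈ U_h`. -/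
theorem second_strang_lemma
    {X Vh : Type*} [NormedAddCommGroup X] [NormedSpace ℝ X]
    [NormedAddCommGroup Vh] [NormedSpace ℝ Vh]
    (Uh : Submodule ℝ X)
    (ah : X →ₗ[ℝ] Vh →ₗ[ℝ] ℝ) (Fh : Vh →ₗ[ℝ] ℝ)
    (c₁ : ℝ) (hc₁ : 0 < c₁)
    (hinfsup : ∀ uh ∈ Uh,
      c₁ * ‖uh‖ ≤ sSup {r : ℝ | ∃ vh : Vh, vh ≠ 0 ∧ r = ah uh vh / ‖vh‖})
    (c₄ : ℝ) (hc₄ : 0 < c₄)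
    (hcont : ∀ (x : X) (vh : Vh), |ah x vh| ≤ c₄ * ‖x‖ * ‖vh‖)
    (u : X)
    (uh : X) (huhmem : uh ∈ Uh) (huh : ∀ vh : Vh, ah uh vh = Fh vh) :
    (∀ wh ∈ Uh,
      ‖u - uh‖ ≤ (1 + c₄ / c₁) * ‖u - wh‖
        + (1 / c₁) * sSup {r : ℝ | ∃ vh : Vh, vh ≠ 0 ∧ r = |Fh vh - ah u vh| / ‖vh‖}) ∧
    ‖u - uh‖ ≤
      (1 + c₄ / c₁) * sInf {s : ℝ | ∃ wh ∈ Uh, s = ‖u - wh‖}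
      + (1 / c₁) * sSup {r : ℝ | ∃ vh : Vh, vh ≠ 0 ∧ r = |Fh vh - ah u vh| / ‖vh‖} := by
  set S : ℝ := sSup {r : ℝ | ∃ vh : Vh, vh ≠ 0 ∧ r = |Fh vh - ah u vh| / ‖vh‖} with hS
  have hbdd : BddAbove {r : ℝ | ∃ vh : Vh, vh ≠ 0 ∧ r = |Fh vh - ah u vh| / ‖vh‖} := by
    refine ⟨c₄ * ‖uh - u‖, ?_⟩
    rintro r ⟨v, hv, rfl⟩
    rw [div_le_iff₀ (norm_pos_iff.mpr hv)]
    have h := hcont (uh - u) v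
    rwa [map_sub, LinearMap.sub_apply, huh] at h
  have hS0 : 0 ≤ S := by
    apply Real.sSup_nonneg
    rintro r ⟨v, hv, rfl⟩
    positivity
  have main : ∀ wh ∈ Uh, ‖u - uh‖ ≤ (1 + c₄ / c₁) * ‖u - wh‖ + (1 / c₁) * S := by
    intro wh hwh
    have h1 : c₁ * ‖uh - wh‖ ≤ c₄ * ‖u - wh‖ + S := by
      refine (hinfsup _ (Uh.sub_mem huhmem hwh)).trans (Real.sSup_le ?_ (by positivity))
      rintro r ⟨v, hv, rfl⟩
      have hv' := norm_pos_iff.mpr hv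
      have h2 : |Fh v - ah u v| / ‖v‖ ≤ S := le_csSup hbdd ⟨v, hv, rfl⟩
      rw [div_le_iff₀ hv'] at h2 ⊢
      have h3 := hcont (u - wh) v
      rw [map_sub, LinearMap.sub_apply] at h3 ⊢
      rw [huh]
      have h4 := le_abs_self (Fh v - ah u v)
      have h5 := le_abs_self (ah u v - ah wh v)
      linarith
    have h2 : ‖uh - wh‖ ≤ (c₄ * ‖u - wh‖ + S) / c₁ := by
      rw [le_div_iff₀ hc₁]
      linarith
    have h3 : ‖u - uh‖ ≤ ‖u - wh‖ + ‖uh - wh‖ := by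
      have h := norm_sub_le (u - wh) (uh - wh)
      rwa [sub_sub_sub_cancel_right] at h
    calc ‖u - uh‖ ≤ ‖u - wh‖ + (c₄ * ‖u - wh‖ + S) / c₁ := by linarith
      _ = _ := by ring
  refine ⟨main, ?_⟩
  have hK : 0 < 1 + c₄ / c₁ := by positivity
  have h : (‖u - uh‖ - (1 / c₁) * S) / (1 + c₄ / c₁) ≤
      sInf {s : ℝ | ∃ wh ∈ Uh, s = ‖u - wh‖} := by
    refine le_csInf ⟨‖u - uh‖, uh, huhmem, rfl⟩ ?_
    rintro s ⟨wh, hwh, rfl⟩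
    rw [div_le_iff₀ hK]
    linarith [main wh hwh]
  rw [div_le_iff₀ hK] at h
  linarith
end

section
/- Fortin criterion: assume the LBB condition holds, i.e. there is β > 0 with sup over v ∈ V, v ≠ 0 of b(v,μ)/‖v‖_V ≥ β‖μ‖_M for all μ ∈ M. Then the discrete LBB condition (there exists β_h > 0 with sup over v_h ∈ V_h, v_h ≠ 0 of b(v_h,μ_h)/‖v_h‖_V ≥ β_h‖μ_h‖_M for all μ_h ∈ M_h) holds if and only if there exists a linear operator Π_h : V → V_h and a constant γ_h > 0 such that b(Π_h v, μ_h) = b(v, μ_h) for all v ∈ V and all μ_h ∈ M_h, and ‖Π_h v‖_V ≤ γ_h‖v‖_V for all v ∈ V. In particular, if such Π_h exists then the discrete LBB condition holds with constant β/γ_h. -/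
/-- **Fortin criterion.** Assume the LBB condition holds with constant `β > 0`. Then
the discrete LBB condition holds (for some `β_h > 0`) if and only if there exist a
linear operator `Π_h : V → V_h` and `γ_h > 0` with `b(Π_h v, μ_h) = b(v, μ_h)` for
all `v ∈ V`, `μ_h ∈ M_h`, and `‖Π_h v‖ ≤ γ_h‖v‖` for all `v ∈ V`. In particular, if
such a `Π_h` exists then the discrete LBB condition holds with constant `β/γ_h`. -/
theorem fortin_criterion
    {V M : Type*} [NormedAddCommGroup V] [NormedSpace ℝ V] [CompleteSpace V]
    [NormedAddCommGroup M] [NormedSpace ℝ M] [CompleteSpace M]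
    (hreflV : Function.Surjective (NormedSpace.inclusionInDoubleDual ℝ V))
    (hreflM : Function.Surjective (NormedSpace.inclusionInDoubleDual ℝ M))
    (b : V →ₗ[ℝ] M →ₗ[ℝ] ℝ)
    (Cb : ℝ) (hCb : ∀ (v : V) (μ : M), |b v μ| ≤ Cb * ‖v‖ * ‖μ‖)
    (Vh : Submodule ℝ V) (Mh : Submodule ℝ M)
    [FiniteDimensional ℝ Vh] [FiniteDimensional ℝ Mh]
    (β : ℝ) (hβ : 0 < β)
    (hLBB : ∀ μ : M, β * ‖μ‖ ≤ sSup {r : ℝ | ∃ v : V, v ≠ 0 ∧ r = b v μ / ‖v‖}) :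
    ((∃ βh : ℝ, 0 < βh ∧ ∀ μh : Mh,
        βh * ‖μh‖ ≤ sSup {r : ℝ | ∃ vh : Vh, vh ≠ 0 ∧ r = b (vh : V) (μh : M) / ‖vh‖}) ↔
      (∃ (Pih : V →ₗ[ℝ] Vh) (γh : ℝ), 0 < γh ∧
        (∀ (v : V) (μh : Mh), b (Pih v : V) (μh : M) = b v (μh : M)) ∧
        (∀ v : V, ‖Pih v‖ ≤ γh * ‖v‖))) ∧
    (∀ (Pih : V →ₗ[ℝ] Vh) (γh : ℝ), 0 < γh →
      (∀ (v : V) (μh : Mh), b (Pih v : V) (μh : M) = b v (μh : M)) →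
      (∀ v : V, ‖Pih v‖ ≤ γh * ‖v‖) →
      ∀ μh : Mh,
        (β / γh) * ‖μh‖ ≤
          sSup {r : ℝ | ∃ vh : Vh, vh ≠ 0 ∧ r = b (vh : V) (μh : M) / ‖vh‖}) := by
  have hbdd : ∀ μh : Mh, BddAbove
      {r : ℝ | ∃ vh : Vh, vh ≠ 0 ∧ r = b (vh : V) (μh : M) / ‖vh‖} := by
    intro μh
    refine ⟨Cb * ‖μh‖, ?_⟩
    rintro r ⟨v, hv, rfl⟩
    have hp : 0 < ‖v‖ := norm_pos_iff.mpr hv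
    rw [div_le_iff₀ hp]
    have h1 := (le_abs_self _).trans (hCb (v : V) (μh : M))
    simp only [Submodule.coe_norm] at *
    linarith
  have key : ∀ (Pih : V →ₗ[ℝ] Vh) (γh : ℝ), 0 < γh →
      (∀ (v : V) (μh : Mh), b (Pih v : V) (μh : M) = b v (μh : M)) →
      (∀ v : V, ‖Pih v‖ ≤ γh * ‖v‖) →
      ∀ μh : Mh,
        (β / γh) * ‖μh‖ ≤
          sSup {r : ℝ | ∃ vh : Vh, vh ≠ 0 ∧ r = b (vh : V) (μh : M) / ‖vh‖} := by
    intro Pih γh hγ hP hPn μh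
    set S := sSup {r : ℝ | ∃ vh : Vh, vh ≠ 0 ∧ r = b (vh : V) (μh : M) / ‖vh‖} with hS
    have hle : ∀ vh : Vh, b (vh : V) (μh : M) ≤ S * ‖vh‖ := by
      intro vh
      by_cases h0 : vh = 0
      · simp [h0]
      · rw [← div_le_iff₀ (norm_pos_iff.mpr h0)]
        exact le_csSup (hbdd μh) ⟨vh, h0, rfl⟩
    have hS0 : 0 ≤ S := by
      by_cases h : ∃ vh : Vh, vh ≠ 0
      · obtain ⟨vh, h0⟩ := h
        have h1 := hle vh
        have h2 := hle (-vh)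
        simp only [Submodule.coe_neg, map_neg, LinearMap.neg_apply, norm_neg] at h2
        have hp : 0 < ‖vh‖ := norm_pos_iff.mpr h0
        by_contra hc
        push Not at hc
        nlinarith
      · apply Real.sSup_nonneg
        rintro r ⟨v, hv, -⟩
        exact absurd ⟨v, hv⟩ h
    have h3 : sSup {r : ℝ | ∃ v : V, v ≠ 0 ∧ r = b v (μh : M) / ‖v‖} ≤ S * γh := by
      apply Real.sSup_le _ (by positivity)
      rintro r ⟨v, hv, rfl⟩
      rw [div_le_iff₀ (norm_pos_iff.mpr hv), ← hP v μh, mul_assoc]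
      exact (hle _).trans (mul_le_mul_of_nonneg_left (hPn v) hS0)
    have h4 := (hLBB (μh : M)).trans h3
    rw [div_mul_eq_mul_div, div_le_iff₀ hγ]
    exact h4
  refine ⟨⟨?_, ?_⟩, key⟩
  · rintro ⟨βh, hβh, hd⟩
    let T : Vh →ₗ[ℝ] Mh →ₗ[ℝ] ℝ := b.domRestrict₁₂ Vh Mh
    have hinj : Function.Injective T.flip := by
      rw [injective_iff_map_eq_zero]
      intro μ hμ
      have h1 : sSup {r : ℝ | ∃ vh : Vh, vh ≠ 0 ∧ r = b (vh : V) (μ : M) / ‖vh‖} ≤ 0 := by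
        apply Real.sSup_le _ le_rfl
        rintro r ⟨v, hv, rfl⟩
        have : b (v : V) (μ : M) = 0 := LinearMap.congr_fun hμ v
        simp [this]
      have h2 := (hd μ).trans h1
      have h3 : ‖μ‖ ≤ 0 := by
        by_contra hc
        push Not at hc
        nlinarith [mul_pos hβh hc]
      exact norm_le_zero_iff.mp h3
    have hsurj : Function.Surjective T := LinearMap.flip_injective_iff₁.mp hinj
    obtain ⟨R, hR⟩ := T.exists_rightInverse_of_surjective (LinearMap.range_eq_top.mpr hsurj)
    let B : V →L[ℝ] Mh →L[ℝ] ℝ := LinearMap.mkContinuous₂ (b.compl₂ Mh.subtype) Cb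
      (fun v μ => hCb v μ)
    let R' : (Mh →L[ℝ] ℝ) →L[ℝ] Vh :=
      LinearMap.toContinuousLinearMap (R ∘ₗ ContinuousLinearMap.coeLM ℝ)
    let P : V →L[ℝ] Vh := R'.comp B
    refine ⟨P, ‖P‖ + 1, by positivity, ?_, ?_⟩
    · intro v μ
      exact LinearMap.congr_fun (LinearMap.congr_fun hR (B v : Mh →ₗ[ℝ] ℝ)) μ
    · intro v
      have := P.le_opNorm v
      have h0 := norm_nonneg v
      change ‖P v‖ ≤ _
      linarith
  · rintro ⟨P, γ, hγ, h1, h2⟩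
    exact ⟨β / γ, div_pos hβ hγ, key P γ hγ h1 h2⟩
end

section
/- Existence and uniqueness of the moment-matching polynomial (classical-derivative version): let k ≥ 1 and let v : ℝⁿ → ℝ be of class C^{k−1} such that every partial derivative D^α v with |α| ≤ k−1 is Lebesgue-integrable on Ω. Then there exists a unique polynomial q in n variables of total degree at most k−1 such that ∫_Ω D^α(v − q)(x) dx = 0 for every multi-index α with |α| ≤ k−1. In particular (uniqueness part): the only polynomial p of total degree at most k−1 with ∫_Ω (D^α p)(x) dx = 0 for all |α| ≤ k−1 is p = 0. -/
open MeasureTheory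

/-- The classical partial derivative in the `i`-th coordinate direction of a function
`f : ℝⁿ → ℝ`. -/
noncomputable def partialDeriv' {n : ℕ} (i : Fin n) (f : (Fin n → ℝ) → ℝ) :
    (Fin n → ℝ) → ℝ :=
  fun x => fderiv ℝ f x (Pi.single i 1)

/-- The iterated partial derivative `D^α f` of `f : ℝⁿ → ℝ` for a multi-index
`α = (α₁, …, αₙ)`, taking `αᵢ` derivatives in the direction `i`. -/
noncomputable def multiDeriv {n : ℕ} (α : Fin n → ℕ) (f : (Fin n → ℝ) → ℝ) :
    (Fin n → ℝ) → ℝ :=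
  (List.finRange n).foldr (fun i g => (partialDeriv' i)^[α i] g) f

open MvPolynomial in
lemma contDiff_evalP {n : ℕ} (p : MvPolynomial (Fin n) ℝ) (m : WithTop ℕ∞) :
    ContDiff ℝ m (fun y : Fin n → ℝ => eval y p) := by
  induction p using MvPolynomial.induction_on with
  | C a => simpa using contDiff_const
  | add p q hp hq => simpa using hp.add hq
  | mul_X p i hp => simpa using hp.mul (contDiff_apply ℝ ℝ i)

open MvPolynomial in
lemma partialDeriv_evalP {n : ℕ} (i : Fin n) (p : MvPolynomial (Fin n) ℝ) :
    partialDeriv' i (fun y : Fin n → ℝ => eval y p) = fun y => eval y (pderiv i p) := by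
  have hd : ∀ (p : MvPolynomial (Fin n) ℝ) x,
      DifferentiableAt ℝ (fun y : Fin n → ℝ => eval y p) x :=
    fun p x => (contDiff_evalP p 1).differentiable (by simp) x
  funext x
  unfold partialDeriv'
  induction p using MvPolynomial.induction_on with
  | C a => simp
  | add p q hp hq =>
    simp only [map_add]
    rw [fderiv_fun_add (hd p x) (hd q x)]
    simp [hp, hq]
  | mul_X p j hp =>
    have hj : HasFDerivAt (fun y : Fin n → ℝ => y j)
      (ContinuousLinearMap.proj (R := ℝ) (φ := fun _ : Fin n => ℝ) j) x := hasFDerivAt_apply j x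
    simp only [map_mul, eval_X]
    rw [fderiv_fun_mul (hd p x) hj.differentiableAt, hj.fderiv]
    simp only [pderiv_mul, pderiv_X, map_add, map_mul, eval_X]
    simp [hp, Pi.single_apply, eq_comm]
    try (split_ifs <;> ring)

lemma iter_evalP {n : ℕ} (i : Fin n) (a : ℕ) (p : MvPolynomial (Fin n) ℝ) :
    (partialDeriv' i)^[a] (fun y : Fin n → ℝ => MvPolynomial.eval y p) =
      fun y => MvPolynomial.eval y
        (((MvPolynomial.pderiv i : Derivation ℝ _ _).toLinearMap ^ a : Module.End ℝ _) p) := by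
  induction a with
  | zero => simp
  | succ a ih =>
    rw [Function.iterate_succ_apply', ih, partialDeriv_evalP, pow_succ']
    rfl

noncomputable def polyD {n : ℕ} (l : List (Fin n)) (α : Fin n → ℕ) :
    Module.End ℝ (MvPolynomial (Fin n) ℝ) :=
  (l.map fun i => ((MvPolynomial.pderiv i : Derivation ℝ (MvPolynomial (Fin n) ℝ) _).toLinearMap ^ (α i)
    : Module.End ℝ (MvPolynomial (Fin n) ℝ))).prod

lemma fold_evalP {n : ℕ} (l : List (Fin n)) (α : Fin n → ℕ) (p : MvPolynomial (Fin n) ℝ) :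
    l.foldr (fun i g => (partialDeriv' i)^[α i] g) (fun y : Fin n → ℝ => MvPolynomial.eval y p) =
      fun y => MvPolynomial.eval y (polyD l α p) := by
  induction l with
  | nil => simp [polyD]
  | cons i l ih =>
    rw [List.foldr_cons, ih, iter_evalP]
    simp [polyD]

lemma partialDeriv_contDiff {n : ℕ} (i : Fin n) (j : ℕ) {f : (Fin n → ℝ) → ℝ}
    (hf : ContDiff ℝ ((j + 1 : ℕ) : ℕ∞) f) : ContDiff ℝ (j : ℕ∞) (partialDeriv' i f) := by
  have : ContDiff ℝ (j : ℕ∞) (fderiv ℝ f) := hf.fderiv_right (by norm_cast)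
  exact this.clm_apply contDiff_const

lemma iter_sub {n : ℕ} (i : Fin n) (a j : ℕ) {f g : (Fin n → ℝ) → ℝ}
    (hf : ContDiff ℝ ((a + j : ℕ) : ℕ∞) f) (hg : ContDiff ℝ ((a + j : ℕ) : ℕ∞) g) :
    ContDiff ℝ (j : ℕ∞) ((partialDeriv' i)^[a] f) ∧
    ContDiff ℝ (j : ℕ∞) ((partialDeriv' i)^[a] g) ∧
    (partialDeriv' i)^[a] (fun y => f y - g y) =
      fun y => (partialDeriv' i)^[a] f y - (partialDeriv' i)^[a] g y := by
  induction a generalizing f g with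
  | zero => simp at hf hg ⊢; exact ⟨hf, hg⟩
  | succ a ih =>
    simp only [Function.iterate_succ_apply]
    have e : a + 1 + j = a + j + 1 := by ring
    rw [e] at hf hg
    have : partialDeriv' i (fun y => f y - g y) =
        fun y => partialDeriv' i f y - partialDeriv' i g y := by
      funext x
      unfold partialDeriv'
      rw [fderiv_fun_sub (hf.differentiable (by norm_cast) x)
        (hg.differentiable (by norm_cast) x)]
      rfl
    rw [this]
    exact ih (partialDeriv_contDiff i _ hf) (partialDeriv_contDiff i _ hg)

lemma fold_sub {n : ℕ} (l : List (Fin n)) (α : Fin n → ℕ) (j : ℕ) {f g : (Fin n → ℝ) → ℝ}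
    (hf : ContDiff ℝ (((l.map α).sum + j : ℕ) : ℕ∞) f)
    (hg : ContDiff ℝ (((l.map α).sum + j : ℕ) : ℕ∞) g) :
    ContDiff ℝ (j : ℕ∞) (l.foldr (fun i g => (partialDeriv' i)^[α i] g) f) ∧
    ContDiff ℝ (j : ℕ∞) (l.foldr (fun i g => (partialDeriv' i)^[α i] g) g) ∧
    l.foldr (fun i g => (partialDeriv' i)^[α i] g) (fun y => f y - g y) =
      fun y => l.foldr (fun i g => (partialDeriv' i)^[α i] g) f y -
        l.foldr (fun i g => (partialDeriv' i)^[α i] g) g y := by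
  induction l generalizing j with
  | nil => simp at hf hg ⊢; exact ⟨hf, hg⟩
  | cons i l ih =>
    have e : ((i :: l).map α).sum + j = (l.map α).sum + (α i + j) := by simp; ring
    rw [e] at hf hg
    obtain ⟨h1, h2, h3⟩ := ih _ hf hg
    simp only [List.foldr_cons]
    rw [h3]
    exact iter_sub i (α i) j h1 h2

lemma coeff_iter {n : ℕ} (i : Fin n) (a : ℕ) (m : Fin n →₀ ℕ) :
    ∃ c : ℝ, 0 < c ∧ ∀ p : MvPolynomial (Fin n) ℝ, MvPolynomial.coeff m
      (((MvPolynomial.pderiv i : Derivation ℝ _ _).toLinearMap ^ a : Module.End ℝ _) p) =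
      c * MvPolynomial.coeff (m + Finsupp.single i a) p := by
  induction a generalizing m with
  | zero => exact ⟨1, by simp⟩
  | succ a ih =>
    obtain ⟨c, hc, h⟩ := ih (m + Finsupp.single i 1)
    refine ⟨c * (m i + 1), by positivity, fun p => ?_⟩
    rw [pow_succ']
    change MvPolynomial.coeff m (MvPolynomial.pderiv i
      (((MvPolynomial.pderiv i : Derivation ℝ _ _).toLinearMap ^ a : Module.End ℝ _) p)) = _
    rw [MvPolynomial.coeff_pderiv, h, add_assoc, ← Finsupp.single_add, add_comm 1 a]
    ring

lemma coeff_polyD {n : ℕ} (l : List (Fin n)) (α : Fin n → ℕ) (m : Fin n →₀ ℕ) :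
    ∃ c : ℝ, 0 < c ∧ ∀ p : MvPolynomial (Fin n) ℝ, MvPolynomial.coeff m (polyD l α p) =
      c * MvPolynomial.coeff (m + (l.map fun i => Finsupp.single i (α i)).sum) p := by
  induction l generalizing m with
  | nil => exact ⟨1, by simp [polyD]⟩
  | cons i l ih =>
    obtain ⟨c, hc, h⟩ := coeff_iter i (α i) m
    obtain ⟨d, hd, h'⟩ := ih (m + Finsupp.single i (α i))
    refine ⟨c * d, by positivity, fun p => ?_⟩
    have : polyD (i :: l) α p = ((MvPolynomial.pderiv i : Derivation ℝ _ _).toLinearMap ^ (α i)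
      : Module.End ℝ _) (polyD l α p) := by simp [polyD]
    rw [this, h, h', List.map_cons, List.sum_cons, add_assoc, mul_assoc]

lemma coeff_polyD_fin {n : ℕ} (α : Fin n →₀ ℕ) (m : Fin n →₀ ℕ) :
    ∃ c : ℝ, 0 < c ∧ ∀ p : MvPolynomial (Fin n) ℝ,
      MvPolynomial.coeff m (polyD (List.finRange n) α p) =
      c * MvPolynomial.coeff (m + α) p := by
  have := coeff_polyD (List.finRange n) α m
  have e : ((List.finRange n).map fun i => Finsupp.single i (α i)).sum = α := by
    rw [← List.ofFn_eq_map, List.sum_ofFn]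
    exact Finsupp.univ_sum_single α
  rwa [e] at this

lemma integrable_evalP {n : ℕ} {Ω : Set (Fin n → ℝ)} (hb : Bornology.IsBounded Ω)
    (p : MvPolynomial (Fin n) ℝ) :
    IntegrableOn (fun y : Fin n → ℝ => MvPolynomial.eval y p) Ω volume :=
  (((contDiff_evalP p 0).continuous.continuousOn).integrableOn_compact
    hb.isCompact_closure).mono_set subset_closure

lemma uniq_aux {n K : ℕ} (Ω : Set (Fin n → ℝ)) (hΩne : Ω.Nonempty) (hΩopen : IsOpen Ω)
    (hΩbdd : Bornology.IsBounded Ω) (p : MvPolynomial (Fin n) ℝ) (hp : p.totalDegree ≤ K)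
    (h : ∀ α : Fin n →₀ ℕ, (α.sum fun _ e => e) ≤ K →
        ∫ x in Ω, MvPolynomial.eval x (polyD (List.finRange n) α p) = 0) : p = 0 := by
  by_contra hne
  obtain ⟨α, hα, hdeg⟩ := Finset.exists_mem_eq_sup p.support
    (MvPolynomial.support_nonempty.2 hne) (fun s => s.sum fun _ e => e)
  change p.totalDegree = _ at hdeg
  have h1 := h α (hdeg ▸ hp)
  obtain ⟨c, hc, hcoef⟩ := coeff_polyD_fin α 0
  have hC : polyD (List.finRange n) α p = MvPolynomial.C (c * MvPolynomial.coeff α p) := by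
    ext m
    rw [MvPolynomial.coeff_C]
    split_ifs with hm
    · subst hm; rw [hcoef, zero_add]
    · obtain ⟨d, -, hd⟩ := coeff_polyD_fin α m
      rw [hd]
      have : MvPolynomial.coeff (m + α) p = 0 := by
        by_contra hh
        have h2 := MvPolynomial.le_totalDegree (MvPolynomial.mem_support_iff.2 hh)
        rw [hdeg, Finsupp.sum_add_index' (by simp) (by simp)] at h2
        apply hm
        have h3 : (m.sum fun _ e => e) = 0 := by omega
        ext i
        rw [Finsupp.sum_fintype _ _ (by simp)] at h3
        have := Finset.sum_eq_zero_iff.1 h3 i (Finset.mem_univ _)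
        simp [this]
      rw [this, mul_zero]
  rw [hC] at h1
  simp only [MvPolynomial.eval_C, integral_const, smul_eq_mul, mul_eq_zero] at h1
  have hpos : 0 < (volume Ω).toReal :=
    ENNReal.toReal_pos (hΩopen.measure_pos volume hΩne).ne' hΩbdd.measure_lt_top.ne
  have := MvPolynomial.mem_support_iff.1 hα
  rcases h1 with h1 | h1 | h1
  · simp [Measure.real] at h1
    exact hpos.ne' h1
  · exact hc.ne' h1
  · exact this h1

lemma exist_aux {n K : ℕ} (Ω : Set (Fin n → ℝ)) (hΩne : Ω.Nonempty) (hΩopen : IsOpen Ω)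
    (hΩbdd : Bornology.IsBounded Ω) (b : (Fin n →₀ ℕ) → ℝ) :
    ∃ p : MvPolynomial (Fin n) ℝ, p.totalDegree ≤ K ∧
    ∀ α : Fin n →₀ ℕ, (α.sum fun _ e => e) ≤ K →
        ∫ x in Ω, MvPolynomial.eval x (polyD (List.finRange n) α p) = b α := by
  let s : Set (Fin n →₀ ℕ) := {m | (m.sum fun _ e => e) ≤ K}
  have hs : s.Finite := by
    refine (Set.finite_Iic (Finsupp.equivFunOnFinite.symm fun _ : Fin n => K)).subset ?_
    intro m hm i
    have hm : (m.sum fun _ e => e) ≤ K := hm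
    rw [Finsupp.sum_fintype _ _ (by simp)] at hm
    exact (Finset.single_le_sum (f := fun i => m i) (by simp) (Finset.mem_univ i)).trans hm
  haveI := hs.fintype
  let B : Module.Basis s ℝ (MvPolynomial.restrictTotalDegree (Fin n) ℝ K) :=
    MvPolynomial.basisRestrictSupport ℝ s
  haveI := Module.Finite.of_basis B
  let I : MvPolynomial (Fin n) ℝ →ₗ[ℝ] ℝ :=
    { toFun := fun p => ∫ x in Ω, MvPolynomial.eval x p
      map_add' := fun p q => by
        simp only [map_add]
        exact integral_add (integrable_evalP hΩbdd p) (integrable_evalP hΩbdd q)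
      map_smul' := fun c p => by
        simp only [MvPolynomial.smul_eval, RingHom.id_apply, smul_eq_mul]
        exact integral_const_mul _ _ }
  let F : MvPolynomial.restrictTotalDegree (Fin n) ℝ K →ₗ[ℝ] (s → ℝ) :=
    LinearMap.pi fun α => I ∘ₗ polyD (List.finRange n) (α : Fin n →₀ ℕ) ∘ₗ Submodule.subtype _
  have hinj : Function.Injective F := by
    rw [← LinearMap.ker_eq_bot, LinearMap.ker_eq_bot']
    intro p hp
    apply Subtype.ext
    exact uniq_aux Ω hΩne hΩopen hΩbdd p.1 ((MvPolynomial.mem_restrictTotalDegree _ _ _).1 p.2)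
      (fun α hα => congrFun hp ⟨α, hα⟩)
  have hsurj := (LinearMap.injective_iff_surjective_of_finrank_eq_finrank
    (by rw [Module.finrank_eq_card_basis B, Module.finrank_fintype_fun_eq_card])).1 hinj
  obtain ⟨p, hp⟩ := hsurj (fun α => b α)
  exact ⟨p.1, (MvPolynomial.mem_restrictTotalDegree _ _ _).1 p.2,
    fun α hα => congrFun hp ⟨α, hα⟩⟩

/-- **Existence and uniqueness of the moment-matching polynomial.** Let `Ω ⊆ ℝⁿ` be a
nonempty bounded open set, `k ≥ 1`, and `v : ℝⁿ → ℝ` of class `C^{k−1}` such that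
every partial derivative `D^α v` with `|α| ≤ k−1` is integrable on `Ω`. Then there is
a unique polynomial `q` of total degree at most `k−1` with
`∫_Ω D^α(v − q) = 0` for all `|α| ≤ k−1`; in particular the only polynomial `p` of
total degree at most `k−1` with `∫_Ω D^α p = 0` for all `|α| ≤ k−1` is `p = 0`. -/
theorem moment_matching_polynomial
    {n k : ℕ} (hk : 1 ≤ k)
    (Ω : Set (Fin n → ℝ)) (hΩne : Ω.Nonempty) (hΩopen : IsOpen Ω)
    (hΩbdd : Bornology.IsBounded Ω)
    (v : (Fin n → ℝ) → ℝ) (hv : ContDiff ℝ ((k - 1 : ℕ) : ℕ∞) v)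
    (hint : ∀ α : Fin n → ℕ, (∑ i, α i) ≤ k - 1 →
      IntegrableOn (multiDeriv α v) Ω volume) :
    (∃! q : MvPolynomial (Fin n) ℝ, q.totalDegree ≤ k - 1 ∧
      ∀ α : Fin n → ℕ, (∑ i, α i) ≤ k - 1 →
        ∫ x in Ω, multiDeriv α (fun y => v y - MvPolynomial.eval y q) x = 0) ∧
    (∀ p : MvPolynomial (Fin n) ℝ, p.totalDegree ≤ k - 1 →
      (∀ α : Fin n → ℕ, (∑ i, α i) ≤ k - 1 →
        ∫ x in Ω, multiDeriv α (fun y => MvPolynomial.eval y p) x = 0) →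
      p = 0) := by
  have hsum : ∀ α : Fin n →₀ ℕ, (α.sum fun _ e => e) = ∑ i, α i := fun α =>
    Finsupp.sum_fintype _ _ (by simp)
  have hkey : ∀ (q : MvPolynomial (Fin n) ℝ) (α : Fin n → ℕ), (∑ i, α i) ≤ k - 1 →
      ∫ x in Ω, multiDeriv α (fun y => v y - MvPolynomial.eval y q) x =
      (∫ x in Ω, multiDeriv α v x) -
        ∫ x in Ω, MvPolynomial.eval x (polyD (List.finRange n) α q) := by
    intro q α hα
    have e : ((List.finRange n).map α).sum = ∑ i, α i := by
      rw [← List.ofFn_eq_map, List.sum_ofFn]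
    have h := (fold_sub (List.finRange n) α 0 (f := v)
      (g := fun y => MvPolynomial.eval y q)
      (hv.of_le (by rw [e]; exact_mod_cast hα)) (contDiff_evalP q _)).2.2
    rw [fold_evalP] at h
    unfold multiDeriv
    rw [h]
    exact integral_sub (hint α hα) (integrable_evalP hΩbdd _)
  have huniq : ∀ p : MvPolynomial (Fin n) ℝ, p.totalDegree ≤ k - 1 →
      (∀ α : Fin n → ℕ, (∑ i, α i) ≤ k - 1 →
        ∫ x in Ω, MvPolynomial.eval x (polyD (List.finRange n) α p) = 0) → p = 0 :=
    fun p hp h => uniq_aux Ω hΩne hΩopen hΩbdd p hp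
      (fun α hα => h α (by rwa [hsum] at hα))
  refine ⟨?_, ?_⟩
  · obtain ⟨q, hq, hqb⟩ := exist_aux (K := k - 1) Ω hΩne hΩopen hΩbdd
      (fun α => ∫ x in Ω, multiDeriv α v x)
    have hqb' : ∀ α : Fin n → ℕ, (∑ i, α i) ≤ k - 1 →
        ∫ x in Ω, MvPolynomial.eval x (polyD (List.finRange n) α q) =
          ∫ x in Ω, multiDeriv α v x := fun α hα =>
      hqb (Finsupp.equivFunOnFinite.symm α) (by rw [hsum]; exact hα)
    refine ⟨q, ⟨hq, fun α hα => by rw [hkey q α hα, hqb' α hα, sub_self]⟩, ?_⟩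
    rintro r ⟨hr, hrb⟩
    refine sub_eq_zero.1 (huniq (r - q)
      ((MvPolynomial.totalDegree_sub _ _).trans (max_le hr hq)) fun α hα => ?_)
    have h1 := hrb α hα
    rw [hkey r α hα] at h1
    simp only [map_sub]
    rw [integral_sub (integrable_evalP hΩbdd _) (integrable_evalP hΩbdd _), hqb' α hα]
    linarith
  · intro p hp h
    refine huniq p hp fun α hα => ?_
    have := h α hα
    unfold multiDeriv at this
    rwa [fold_evalP] at this
end
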